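/- Let M = ∏_{k=1}^{K} p_k^{n_k} with p_1, …, p_K distinct primes and n_k ≥ 1, and assume p_K > ⋯ > p_2 > p_1^{n_1}. Let S be a nonempty set of divisors of M, each at least 2, and let A : ℤ_M → ℕ be a multiset with positive total mass such that Φ_s(X) ∣ A(X) for all s ∈ S. Then |A| ≥ p_1^{E_1}, where E_1 = #{α ≥ 1 : ∃ s ∈ S with p_1^α ∥ s}. -/

import Mathlib

open Polynomial

/-- Mask polynomial of a multiset (weight function) on `ZMod M`:
`A(X) = ∑_{x ∈ ℤ_M} w(x) · X^{x.val}`. -/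
noncomputable def wmaskPoly (M : ℕ) (w : ZMod M → ℕ) : Polynomial ℤ :=
  ∑ i ∈ Finset.range M, C ((w (i : ZMod M)) : ℤ) * X ^ i

/-- Total mass `|A| = ∑_x w(x)` of a multiset on `ZMod M`. -/
def wmass (M : ℕ) (w : ZMod M → ℕ) : ℕ :=
  ∑ i ∈ Finset.range M, w (i : ZMod M)

/-! Suppose `Φ_{tN} ∣ A` with `t` prime to `N` and every prime factor of `t` larger than the number
`m` of terms of `A`. If `η`, `ω` are primitive roots of unity of orders `N`, `t`, then `η ω ^ k` has
order `t N` for `1 ≤ k ≤ m`, so `A` vanishes at all these points. As a function of `k`, the value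
`A (η ω ^ k)` is a combination of the `m` geometric progressions `(ω ^ i) ^ k`, hence satisfies a
linear recurrence of order `m` with nonzero constant term, and must vanish at `k = 0` as well:
`Φ_N ∣ A`.

Write `p = p_1`, `E = E_1`. If `|A|`, which bounds the number of terms, were less than `p ^ E`, then
by the growth condition every prime factor `q ≠ p` of an element of `S` would exceed it, so each
`Φ_s ∣ A` with `p ^ α ∥ s` would descend to `Φ_{p ^ α} ∣ A`. As `Φ_{p ^ α}(1) = p` for `α ≥ 1`, this
makes `|A| = A(1)` a positive multiple of `p ^ E`.
-/

theorem eval_eq_zero_of_eval_mul_pow_eq_zero {R : Type*} [CommRing R] [IsDomain R] {f : R[X]}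
    {x ω : R} (hω : ω ≠ 0) (h : ∀ k ≠ 0, k ≤ f.support.card → f.eval (x * ω ^ k) = 0) :
    f.eval x = 0 := by
  -- The coefficients of `g` are those of the linear recurrence satisfied by `k ↦ f (x * ω ^ k)`.
  let g : R[X] := ∏ i ∈ f.support, (X - C (ω ^ i))
  have hg_degree : g.natDegree < f.support.card + 1 := by simp [g, -map_pow]
  have hg_coeff_zero : g.coeff 0 ≠ 0 := by
    simp [g, coeff_zero_prod, Finset.prod_ne_zero_iff, hω, -map_pow]
  have hg_eval (i : ℕ) (hi : i ∈ f.support) : g.eval (ω ^ i) = 0 := by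
    rw [eval_prod]
    exact Finset.prod_eq_zero hi (by simp)
  have recurrence :
      ∑ k ∈ Finset.range (f.support.card + 1), g.coeff k * f.eval (x * ω ^ k) = 0 := calc
    _ = ∑ i ∈ f.support, f.coeff i * x ^ i * g.eval (ω ^ i) := by
      simp_rw [eval_eq_sum (p := f), Polynomial.sum, eval_eq_sum_range' hg_degree, Finset.mul_sum]
      rw [Finset.sum_comm]
      refine Finset.sum_congr rfl fun i _ => Finset.sum_congr rfl fun k _ => ?_
      ring
    _ = 0 := Finset.sum_eq_zero fun i hi => by rw [hg_eval i hi, mul_zero]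
  have hzero : g.coeff 0 * f.eval x = 0 := by
    rwa [Finset.sum_eq_single_of_mem 0 (by simp), pow_zero, mul_one] at recurrence
    intro k hk hk0
    rw [h k hk0 (Finset.mem_range_succ_iff.mp hk), mul_zero]
  exact (mul_eq_zero.mp hzero).resolve_left hg_coeff_zero

theorem cyclotomic_dvd_iff_aeval_eq_zero {K : Type*} [Field K] [CharZero K] {n : ℕ} {ζ : K}
    (hζ : IsPrimitiveRoot ζ n) (hn : 0 < n) {A : ℤ[X]} : cyclotomic n ℤ ∣ A ↔ aeval ζ A = 0 := by
  rw [cyclotomic_eq_minpoly hζ hn, minpoly.isIntegrallyClosed_dvd_iff (hζ.isIntegral hn)]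

theorem isPrimitiveRoot_mul_of_coprime {R : Type*} [CommMonoid R] {m n : ℕ} {x y : R}
    (hx : IsPrimitiveRoot x m) (hy : IsPrimitiveRoot y n) (hmn : m.Coprime n) :
    IsPrimitiveRoot (x * y) (m * n) := by
  rw [hx.eq_orderOf, hy.eq_orderOf] at hmn ⊢
  rw [← (Commute.all x y).orderOf_mul_eq_mul_orderOf_of_coprime hmn]
  exact IsPrimitiveRoot.orderOf _

theorem cyclotomic_dvd_of_cyclotomic_mul_dvd {A : ℤ[X]} {t N : ℕ} (ht : t ≠ 0) (hN : N ≠ 0)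
    (htN : t.Coprime N) (hsupport : ∀ q, q.Prime → q ∣ t → A.support.card < q)
    (h : cyclotomic (t * N) ℤ ∣ A) : cyclotomic N ℤ ∣ A := by
  have hη := Complex.isPrimitiveRoot_exp N hN
  have hω := Complex.isPrimitiveRoot_exp t ht
  rw [cyclotomic_dvd_iff_aeval_eq_zero hη (Nat.pos_of_ne_zero hN), ← eval_map_algebraMap]
  refine eval_eq_zero_of_eval_mul_pow_eq_zero (hω.ne_zero ht) fun k hk0 hk => ?_
  rw [support_map_of_injective A (algebraMap ℤ ℂ).injective_int] at hk
  have hkt : k.Coprime t := Nat.coprime_of_dvd fun q hq hqk hqt =>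
    (hk.trans_lt (hsupport q hq hqt)).not_ge (Nat.le_of_dvd (Nat.pos_of_ne_zero hk0) hqk)
  have hroot := isPrimitiveRoot_mul_of_coprime (hω.pow_of_coprime k hkt) hη htN
  rw [eval_map_algebraMap, mul_comm]
  exact (cyclotomic_dvd_iff_aeval_eq_zero hroot (by positivity)).mp h

theorem cyclotomic_isRelPrime {m n : ℕ} (hm : 0 < m) (hn : 0 < n) (hmn : m ≠ n) :
    IsRelPrime (cyclotomic m ℤ) (cyclotomic n ℤ) := by
  have hirr_m := cyclotomic.irreducible hm
  refine hirr_m.isRelPrime_iff_not_dvd.mpr fun hdvd => hmn (cyclotomic_injective (R := ℤ) ?_)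
  exact eq_of_monic_of_associated (cyclotomic.monic m ℤ) (cyclotomic.monic n ℤ)
    (hirr_m.associated_of_dvd (cyclotomic.irreducible hn) hdvd)

theorem prime_pow_card_dvd_eval_one {A : ℤ[X]} {p : ℕ} (hp : p.Prime) {T : Finset ℕ}
    (hT : ∀ a ∈ T, a ≠ 0) (hdvd : ∀ a ∈ T, cyclotomic (p ^ a) ℤ ∣ A) :
    (p : ℤ) ^ T.card ∣ A.eval 1 := by
  have : Fact p.Prime := ⟨hp⟩
  have hprod : ∏ a ∈ T, cyclotomic (p ^ a) ℤ ∣ A := by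
    refine Finset.prod_dvd_of_isRelPrime (fun a _ b _ hab => ?_) hdvd
    exact cyclotomic_isRelPrime (pow_pos hp.pos a) (pow_pos hp.pos b)
      ((Nat.pow_right_injective hp.two_le).ne hab)
  have heval : ∀ a ∈ T, (cyclotomic (p ^ a) ℤ).eval 1 = p := by
    intro a ha
    obtain ⟨k, rfl⟩ := Nat.exists_eq_succ_of_ne_zero (hT a ha)
    exact eval_one_cyclotomic_prime_pow k
  simpa [eval_prod, Finset.prod_congr rfl heval] using eval_dvd (x := 1) hprod

/-- The set of `α ≥ 1` such that `p ^ α` exactly divides some element of `S`. The exponent `0` is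
erased, which also discards the junk value `Nat.factorization 0 p = 0`. -/
def exactExponents (p : ℕ) (S : Finset ℕ) : Finset ℕ :=
  (S.image fun s => s.factorization p).erase 0

theorem coe_exactExponents {p : ℕ} (hp : p.Prime) (S : Finset ℕ) :
    (exactExponents p S : Set ℕ) =
      {α : ℕ | 1 ≤ α ∧ ∃ s ∈ S, p ^ α ∣ s ∧ ¬ p ^ (α + 1) ∣ s} := by
  ext α
  have hexact (s : ℕ) (hα : α ≠ 0) :
      s.factorization p = α ↔ p ^ α ∣ s ∧ ¬ p ^ (α + 1) ∣ s := by
    rcases eq_or_ne s 0 with rfl | hs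
    · simp [hα.symm]
    · rw [hp.pow_dvd_iff_le_factorization hs, hp.pow_dvd_iff_le_factorization hs]
      lia
  simp only [exactExponents, Finset.mem_coe, Finset.mem_erase, Finset.mem_image,
    Set.mem_ofPred_eq, Nat.one_le_iff_ne_zero]
  exact and_congr_right fun hα => exists_congr fun s => and_congr_right fun _ => hexact s hα

theorem card_exactExponents_le {p M : ℕ} {S : Finset ℕ} (hM : M ≠ 0) (hS : ∀ s ∈ S, s ∣ M) :
    (exactExponents p S).card ≤ M.factorization p := by
  have hsub : exactExponents p S ⊆ Finset.Ioc 0 (M.factorization p) := by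
    intro α hα
    simp only [exactExponents, Finset.mem_erase, Finset.mem_image] at hα
    obtain ⟨hα0, s, hs, rfl⟩ := hα
    exact Finset.mem_Ioc.mpr ⟨Nat.pos_of_ne_zero hα0,
      (Nat.factorization_le_iff_dvd (ne_zero_of_dvd_ne_zero hM (hS s hs)) hM).mpr (hS s hs) p⟩
  simpa using Finset.card_le_card hsub

theorem pow_card_exactExponents_dvd_eval_one {A : ℤ[X]} {p : ℕ} (hp : p.Prime) {S : Finset ℕ}
    (hsupport : ∀ s ∈ S, ∀ q, q.Prime → q ∣ s → q ≠ p → A.support.card < q)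
    (hdvd : ∀ s ∈ S, cyclotomic s ℤ ∣ A) :
    (p : ℤ) ^ (exactExponents p S).card ∣ A.eval 1 := by
  refine prime_pow_card_dvd_eval_one hp (fun a => Finset.ne_of_mem_erase) fun a ha => ?_
  simp only [exactExponents, Finset.mem_erase, Finset.mem_image] at ha
  obtain ⟨ha0, s, hs, rfl⟩ := ha
  have hs0 : s ≠ 0 := by
    rintro rfl
    simp at ha0
  have hcop : p.Coprime (ordCompl[p] s) := Nat.coprime_ordCompl hp hs0
  refine cyclotomic_dvd_of_cyclotomic_mul_dvd (t := ordCompl[p] s) (Nat.ordCompl_pos p hs0).ne'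
    (pow_pos hp.pos _).ne' (hcop.symm.pow_right _) (fun q hq hqt => ?_) ?_
  · refine hsupport s hs q hq (hqt.trans (Nat.ordCompl_dvd s p)) ?_
    rintro rfl
    exact hq.coprime_iff_not_dvd.mp hcop hqt
  · rw [mul_comm, Nat.ordProj_mul_ordCompl_eq_self]
    exact hdvd s hs

theorem card_support_le_eval_one {A : ℤ[X]} (hA : ∀ i, 0 ≤ A.coeff i) :
    (A.support.card : ℤ) ≤ A.eval 1 := calc
  (A.support.card : ℤ) = ∑ _i ∈ A.support, 1 := by simp
  _ ≤ ∑ i ∈ A.support, A.coeff i := Finset.sum_le_sum fun i hi =>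
    (hA i).lt_of_ne' (mem_support_iff.mp hi)
  _ = A.eval 1 := by simp [eval_eq_sum, Polynomial.sum]

theorem coeff_wmaskPoly_nonneg (M : ℕ) (w : ZMod M → ℕ) (i : ℕ) : 0 ≤ (wmaskPoly M w).coeff i := by
  rw [wmaskPoly, finsetSum_coeff]
  refine Finset.sum_nonneg fun j _ => ?_
  rw [coeff_C_mul_X_pow]
  split_ifs <;> simp

theorem eval_one_wmaskPoly (M : ℕ) (w : ZMod M → ℕ) : (wmaskPoly M w).eval 1 = wmass M w := by
  simp [wmaskPoly, wmass, eval_finsetSum]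

theorem card_support_wmaskPoly_le (M : ℕ) (w : ZMod M → ℕ) :
    (wmaskPoly M w).support.card ≤ wmass M w := by
  exact_mod_cast eval_one_wmaskPoly M w ▸ card_support_le_eval_one (coeff_wmaskPoly_nonneg M w)

theorem exists_eq_of_prime_dvd_prod_pow {ι : Type*} {s : Finset ι} {p n : ι → ℕ}
    (hp : ∀ i ∈ s, (p i).Prime) {q : ℕ} (hq : q.Prime) (h : q ∣ ∏ i ∈ s, p i ^ n i) :
    ∃ i ∈ s, q = p i := by
  obtain ⟨i, hi, hdvd⟩ := hq.prime.exists_mem_finset_dvd h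
  exact ⟨i, hi, (Nat.prime_dvd_prime_iff_eq hq (hp i hi)).mp (hq.dvd_of_dvd_pow hdvd)⟩

theorem factorization_prod_pow_apply {ι : Type*} {s : Finset ι} {p n : ι → ℕ}
    (hp : ∀ i ∈ s, (p i).Prime) (hinj : Set.InjOn p s) {i : ι} (hi : i ∈ s) :
    (∏ j ∈ s, p j ^ n j).factorization (p i) = n i := by
  rw [Nat.factorization_prod_apply fun j hj => pow_ne_zero _ (hp j hj).ne_zero,
    Finset.sum_eq_single_of_mem i hi]
  · simp [(hp i hi).factorization_self]
  · intro j hj hji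
    simp [(hp j hj).factorization, hinj.ne hj hi hji]

theorem pow_card_exactExponents_lt {ι : Type*} {I : Finset ι} {p n : ι → ℕ}
    (hp : ∀ i ∈ I, (p i).Prime) (hinj : Set.InjOn p I) {i₀ : ι} (hi₀ : i₀ ∈ I)
    (hgap : ∀ i ∈ I, i ≠ i₀ → p i₀ ^ n i₀ < p i) {S : Finset ℕ}
    (hS : ∀ s ∈ S, s ∣ ∏ i ∈ I, p i ^ n i) {s q : ℕ} (hs : s ∈ S) (hq : q.Prime) (hqs : q ∣ s)
    (hqp : q ≠ p i₀) : p i₀ ^ (exactExponents (p i₀) S).card < q := by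
  obtain ⟨i, hi, rfl⟩ := exists_eq_of_prime_dvd_prod_pow hp hq (hqs.trans (hS s hs))
  have hcard : (exactExponents (p i₀) S).card ≤ n i₀ := by
    rw [← factorization_prod_pow_apply (n := n) hp hinj hi₀]
    exact card_exactExponents_le
      (Finset.prod_ne_zero_iff.mpr fun j hj => pow_ne_zero _ (hp j hj).ne_zero) hS
  exact (Nat.pow_le_pow_right (hp i₀ hi₀).pos hcard).trans_lt
    (hgap i hi (ne_of_apply_ne p hqp))

theorem mass_ge_of_growth_condition_general {M : ℕ} {w : ZMod M → ℕ} (hw : 0 < wmass M w) {p : ℕ}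
    (hp : p.Prime) {S : Finset ℕ}
    (hgap : ∀ s ∈ S, ∀ q, q.Prime → q ∣ s → q ≠ p → p ^ (exactExponents p S).card ≤ q)
    (hdvd : ∀ s ∈ S, cyclotomic s ℤ ∣ wmaskPoly M w) :
    p ^ (exactExponents p S).card ≤ wmass M w := by
  by_contra! hlt
  have hpow_dvd : p ^ (exactExponents p S).card ∣ wmass M w := by
    have hpow_dvd_eval := pow_card_exactExponents_dvd_eval_one hp (fun s hs q hq hqs hqp =>
      (card_support_wmaskPoly_le M w).trans_lt (hlt.trans_le (hgap s hs q hq hqs hqp))) hdvd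
    rw [eval_one_wmaskPoly] at hpow_dvd_eval
    exact_mod_cast hpow_dvd_eval
  exact hlt.not_ge (Nat.le_of_dvd hw hpow_dvd)

/-- Theorem 7.8: if `M = ∏ p_i^{n_i}` with `p_K > ⋯ > p_2 > p_1^{n_1}`, `S` a nonempty set
of divisors of `M` (each `≥ 2`), and `Φ_s ∣ A(X)` for all `s ∈ S`, then `|A| ≥ p_1^{E_1}`,
where `E_1 = #{α ≥ 1 : ∃ s ∈ S, p_1^α ∥ s}`. -/
theorem mass_ge_of_growth_condition (K : ℕ) (hK : 0 < K) (p n : Fin K → ℕ)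
    (hp : ∀ i, (p i).Prime) (hn : ∀ i, 1 ≤ n i) (hinj : Function.Injective p)
    (M : ℕ) (hM : M = ∏ i, p i ^ n i)
    (hchain : ∀ i j : Fin K, 1 ≤ (i : ℕ) → i < j → p i < p j)
    (hgap : ∀ i : Fin K, 1 ≤ (i : ℕ) → p ⟨0, hK⟩ ^ n ⟨0, hK⟩ < p i)
    (S : Finset ℕ) (hS : S.Nonempty) (hSdvd : ∀ s ∈ S, s ∣ M ∧ 2 ≤ s)
    (w : ZMod M → ℕ) (hw : 0 < wmass M w)
    (hdvd : ∀ s ∈ S, cyclotomic s ℤ ∣ wmaskPoly M w) :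
    p ⟨0, hK⟩ ^ (Set.ncard {α : ℕ | 1 ≤ α ∧
        ∃ s ∈ S, p ⟨0, hK⟩ ^ α ∣ s ∧ ¬ p ⟨0, hK⟩ ^ (α + 1) ∣ s}) ≤ wmass M w := by
  subst hM
  rw [← coe_exactExponents (hp _), Set.ncard_coe_finset]
  refine mass_ge_of_growth_condition_general hw (hp _) (fun s hs q hq hqs hqp => ?_) hdvd
  exact (pow_card_exactExponents_lt (fun i _ => hp i) hinj.injOn (Finset.mem_univ _)
    (fun i _ hi => hgap i (Nat.one_le_iff_ne_zero.mpr (Fin.val_ne_of_ne hi)))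
    (fun s hs => (hSdvd s hs).1) hs hq hqs hqp).le
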